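/- For every integer n ≥ 0, c_n = 1 − Σ_{j=0}^{n} γ_j/j!, where γ_j is the j-th Stieltjes constant; precisely, there exist real numbers γ_0, γ_1, …, γ_n such that for each 0 ≤ j ≤ n the quantity Σ_{k=1}^{m} (log k)^j/k − (log m)^{j+1}/(j+1) converges to γ_j as m → ∞, and c_n = 1 − Σ_{j=0}^{n} γ_j/j!. -/

import Mathlib

open Filter Real MeasureTheory
open scoped Classical

/-- `cconst n = (1/n!) ∫₁^∞ {u} (log u)^n / u² du`. -/
noncomputable def cconst (n : ℕ) : ℝ :=
  (1 / (n.factorial : ℝ)) * ∫ u in Set.Ioi (1:ℝ), Int.fract u * (Real.log u) ^ n / u ^ 2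

/-!
Euler's summation formula gives, for `f` differentiable on `[1, ∞)` with integrable derivative,
`∑_{k ≤ m} f k - ∫₁^m f → f 1 + ∫₁^∞ {u} f' u du`. Take `f u = (log u)^j / u`, for which
`f' u = (j (log u)^(j-1) - (log u)^j) / u²`: the limit `γ_j` exists, `γ_0 = 1 - c_0` and
`γ_j / j! = c_{j-1} - c_j` for `j ≥ 1`, so the sum of the `γ_j / j!` telescopes to `1 - c_n`.
-/

section EulerSummation

theorem integrable_fract_smul {E : Type*} [NormedAddCommGroup E] [NormedSpace ℝ E] {μ : Measure ℝ}
    {g : ℝ → E} (hg : Integrable g μ) : Integrable (fun t ↦ Int.fract t • g t) μ :=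
  hg.bdd_smul 1 measurable_fract.aestronglyMeasurable <| .of_forall fun t ↦ by
    rw [norm_of_nonneg (Int.fract_nonneg t)]
    exact (Int.fract_lt_one t).le

variable {𝕜 : Type*} [RCLike 𝕜] {f : ℝ → 𝕜}

theorem mul_sum_Icc_floor_one {t : ℝ} (ht : 0 ≤ t) (z : 𝕜) :
    z * ∑ _k ∈ Finset.Icc 0 ⌊t⌋₊, 1 = (t + 1) • z - Int.fract t • z := by
  have floor_eq : (⌊t⌋₊ : ℝ) = t - Int.fract t := by
    rw [natCast_floor_eq_intCast_floor ht, Int.self_sub_fract]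
  have sum_eq : ∑ _k ∈ Finset.Icc 0 ⌊t⌋₊, (1 : 𝕜) = ((⌊t⌋₊ + 1 : ℝ) : 𝕜) := by simp
  rw [sum_eq, floor_eq, ← sub_smul, RCLike.real_smul_eq_coe_mul, mul_comm]
  congr 2
  ring

theorem sum_Ioc_floor_eq_integral_add_integral_fract {a b : ℝ} (ha : 0 ≤ a) (hab : a ≤ b)
    (hf : ∀ t ∈ Set.Icc a b, DifferentiableAt ℝ f t)
    (hf' : IntegrableOn (deriv f) (Set.Icc a b)) :
    ∑ k ∈ Finset.Ioc ⌊a⌋₊ ⌊b⌋₊, f k =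
      (∫ t in a..b, f t) + (∫ t in a..b, Int.fract t • deriv f t)
        + Int.fract a • f a - Int.fract b • f b := by
  have deriv_integrable : IntervalIntegrable (deriv f) volume a b :=
    (intervalIntegrable_iff_integrableOn_Icc_of_le hab).2 hf'
  have fract_integrable : IntervalIntegrable (fun t ↦ Int.fract t • deriv f t) volume a b :=
    (intervalIntegrable_iff_integrableOn_Icc_of_le hab).2 (integrable_fract_smul hf')
  have linear_integrable : IntervalIntegrable (fun t ↦ (t + 1) • deriv f t) volume a b :=
    deriv_integrable.continuousOn_smul (by fun_prop)
  have by_parts : ∫ t in a..b, (t + 1) • deriv f t =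
      (b + 1) • f b - (a + 1) • f a - ∫ t in a..b, f t := by
    simpa only [one_smul] using intervalIntegral.integral_smul_deriv_eq_deriv_smul
      (fun t _ ↦ (hasDerivAt_id' t).add_const (1 : ℝ))
      (fun t ht ↦ (hf t (Set.uIcc_of_le hab ▸ ht)).hasDerivAt)
      intervalIntegrable_const deriv_integrable
  have abel_summation := sum_mul_eq_sub_sub_integral_mul (fun _ ↦ (1 : 𝕜)) ha hab hf hf'
  rw [setIntegral_congr_fun measurableSet_Ioc
      fun t ht ↦ mul_sum_Icc_floor_one (ha.trans ht.1.le) (deriv f t),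
    ← intervalIntegral.integral_of_le hab,
    intervalIntegral.integral_sub linear_integrable fract_integrable, by_parts,
    mul_sum_Icc_floor_one ha, mul_sum_Icc_floor_one (ha.trans hab)] at abel_summation
  simp only [mul_one] at abel_summation
  rw [abel_summation]
  abel

theorem tendsto_sum_Icc_sub_integral {a : ℕ}
    (hf : ∀ t ∈ Set.Ici (a : ℝ), DifferentiableAt ℝ f t)
    (hf' : IntegrableOn (deriv f) (Set.Ioi (a : ℝ))) :
    Tendsto (fun m : ℕ ↦ ∑ k ∈ Finset.Icc a m, f k - ∫ t in (a : ℝ)..m, f t) atTop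
      (nhds (f a + ∫ t in Set.Ioi (a : ℝ), Int.fract t • deriv f t)) := by
  have integral_tendsto := intervalIntegral_tendsto_integral_Ioi (a : ℝ)
    (integrable_fract_smul hf') tendsto_natCast_atTop_atTop
  refine (integral_tendsto.const_add (f a)).congr' ?_
  filter_upwards [eventually_ge_atTop a] with m ham
  have integrableOn_Icc : IntegrableOn (deriv f) (Set.Icc a m) :=
    (integrableOn_Icc_iff_integrableOn_Ioc (by finiteness)).2 (hf'.mono_set Set.Ioc_subset_Ioi_self)
  have euler := sum_Ioc_floor_eq_integral_add_integral_fract a.cast_nonneg (Nat.cast_le.2 ham)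
    (fun t ht ↦ hf t ht.1) integrableOn_Icc
  simp only [Nat.floor_natCast, Int.fract_natCast, zero_smul, add_zero, sub_zero] at euler
  rw [← Finset.add_sum_Ioc_eq_sum_Icc ham, euler]
  abel

end EulerSummation

theorem hasDerivAt_log_pow_div (j : ℕ) {x : ℝ} (hx : x ≠ 0) :
    HasDerivAt (fun u ↦ log u ^ j / u) (j * (log x ^ (j - 1) / x ^ 2) - log x ^ j / x ^ 2) x := by
  refine (((hasDerivAt_log hx).fun_pow j).fun_div (hasDerivAt_id' x) hx).congr_deriv ?_
  field_simp

theorem integral_log_pow_div (j : ℕ) {a b : ℝ} (h : (0 : ℝ) ∉ Set.uIcc a b) :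
    ∫ u in a..b, log u ^ j / u = (log b ^ (j + 1) - log a ^ (j + 1)) / (j + 1) := by
  have ne_zero : ∀ x ∈ Set.uIcc a b, x ≠ 0 := fun x hx ↦ ne_of_mem_of_not_mem hx h
  have antideriv : ∀ x ∈ Set.uIcc a b,
      HasDerivAt (fun u ↦ log u ^ (j + 1) / (j + 1)) (log x ^ j / x) x := fun x hx ↦ by
    refine (((hasDerivAt_log (ne_zero x hx)).fun_pow (j + 1)).div_const _).congr_deriv ?_
    push_cast
    field_simp
  have integrable : IntervalIntegrable (fun u ↦ log u ^ j / u) volume a b :=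
    ContinuousOn.intervalIntegrable fun x hx ↦
      (hasDerivAt_log_pow_div j (ne_zero x hx)).continuousAt.continuousWithinAt
  rw [intervalIntegral.integral_eq_sub_of_hasDerivAt antideriv integrable, sub_div]

theorem integrableOn_log_pow_div_sq (n : ℕ) :
    IntegrableOn (fun u ↦ log u ^ n / u ^ 2) (Set.Ioi 1) := by
  have gamma_integrable : IntegrableOn (fun x ↦ exp (-x) * x ^ n) (Set.Ioi (log 1)) := by
    simpa using GammaIntegral_convergent (s := n + 1) (by positivity)
  -- Substituting `u = exp x` turns the integrand into that of `Γ (n + 1)`.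
  refine ((integrableOn_comp_log_Ioi _ one_pos).2 gamma_integrable).congr_fun (fun u hu ↦ ?_)
    measurableSet_Ioi
  have u_pos : 0 < u := one_pos.trans hu
  simp only [exp_neg, exp_log u_pos, smul_eq_mul]
  field_simp

theorem integrableOn_deriv_log_pow_div (j : ℕ) :
    IntegrableOn (deriv fun u ↦ log u ^ j / u) (Set.Ioi 1) :=
  IntegrableOn.congr_fun
    (((integrableOn_log_pow_div_sq (j - 1)).const_mul j).sub (integrableOn_log_pow_div_sq j))
    (fun _ ht ↦ (hasDerivAt_log_pow_div j (one_pos.trans ht).ne').deriv.symm) measurableSet_Ioi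

theorem integrableOn_fract_mul_log_pow_div_sq (n : ℕ) :
    IntegrableOn (fun u ↦ Int.fract u * (log u ^ n / u ^ 2)) (Set.Ioi 1) :=
  integrable_fract_smul (integrableOn_log_pow_div_sq n)

theorem integral_fract_mul_log_pow_div_sq (n : ℕ) :
    ∫ u in Set.Ioi (1 : ℝ), Int.fract u * (log u ^ n / u ^ 2) = n.factorial * cconst n := by
  simp only [cconst, mul_div_assoc]
  field_simp

theorem integral_fract_mul_deriv_log_pow_div (j : ℕ) :
    ∫ u in Set.Ioi (1 : ℝ), Int.fract u * deriv (fun u ↦ log u ^ j / u) u =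
      j * ((j - 1).factorial * cconst (j - 1)) - j.factorial * cconst j := by
  simp only [← integral_fract_mul_log_pow_div_sq]
  rw [← integral_const_mul, ← integral_sub
    ((integrableOn_fract_mul_log_pow_div_sq _).const_mul _)
    (integrableOn_fract_mul_log_pow_div_sq _)]
  refine setIntegral_congr_fun measurableSet_Ioi fun u hu ↦ ?_
  simp only [(hasDerivAt_log_pow_div j (one_pos.trans hu).ne').deriv]
  ring

/-- The sequence whose limit is the `j`-th Stieltjes constant. -/
noncomputable def stieltjesSeq (j m : ℕ) : ℝ :=
  (∑ k ∈ Finset.Icc 1 m, log k ^ j / k) - log m ^ (j + 1) / (j + 1)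

/-- The `j`-th Stieltjes constant `γ_j`. The limit exists by `tendsto_stieltjesSeq`, so the junk
value of `limUnder` does not occur. -/
noncomputable def stieltjesConst (j : ℕ) : ℝ :=
  limUnder atTop (stieltjesSeq j)

-- The term `0 ^ j` is the boundary value `(log 1) ^ j`; at `j = 0`, where `j - 1` is truncated,
-- the term containing it vanishes.
theorem tendsto_stieltjesSeq_cconst (j : ℕ) :
    Tendsto (stieltjesSeq j) atTop
      (nhds (0 ^ j + (j * ((j - 1).factorial * cconst (j - 1)) - j.factorial * cconst j))) := by
  have differentiable (t : ℝ) (ht : 1 ≤ t) : DifferentiableAt ℝ (fun u ↦ log u ^ j / u) t :=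
    (hasDerivAt_log_pow_div j (one_pos.trans_le ht).ne').differentiableAt
  have euler := tendsto_sum_Icc_sub_integral (a := 1) (f := fun u ↦ log u ^ j / u)
    (by simpa using differentiable) (by simpa using integrableOn_deriv_log_pow_div j)
  simp only [Nat.cast_one, log_one, div_one, smul_eq_mul,
    integral_fract_mul_deriv_log_pow_div] at euler
  refine euler.congr' ?_
  filter_upwards [eventually_ge_atTop 1] with m hm
  rw [integral_log_pow_div j (Set.notMem_uIcc_of_lt one_pos (by positivity))]
  simp [stieltjesSeq]

theorem tendsto_stieltjesSeq (j : ℕ) :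
    Tendsto (stieltjesSeq j) atTop (nhds (stieltjesConst j)) :=
  tendsto_nhds_limUnder ⟨_, tendsto_stieltjesSeq_cconst j⟩

theorem stieltjesConst_zero : stieltjesConst 0 = 1 - cconst 0 := by
  rw [stieltjesConst, (tendsto_stieltjesSeq_cconst 0).limUnder_eq]
  simp [sub_eq_add_neg]

theorem stieltjesConst_succ_div_factorial (j : ℕ) :
    stieltjesConst (j + 1) / (j + 1).factorial = cconst j - cconst (j + 1) := by
  rw [stieltjesConst, (tendsto_stieltjesSeq_cconst (j + 1)).limUnder_eq, Nat.add_sub_cancel,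
    ← mul_assoc, ← Nat.cast_mul, ← Nat.factorial_succ]
  field_simp
  simp

theorem sum_stieltjesConst_div_factorial (n : ℕ) :
    ∑ j ∈ Finset.range (n + 1), stieltjesConst j / j.factorial = 1 - cconst n := by
  induction n with
  | zero => simp [stieltjesConst_zero]
  | succ n ih => rw [Finset.sum_range_succ, ih, stieltjesConst_succ_div_factorial]; ring

theorem cconst_eq_stieltjes :
    ∀ n : ℕ, ∃ γs : ℕ → ℝ,
      (∀ j ≤ n, Filter.Tendsto
          (fun m : ℕ =>
            (∑ k ∈ Finset.Icc 1 m, (Real.log k) ^ j / k) -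
              (Real.log m) ^ (j + 1) / (j + 1))
          atTop (nhds (γs j))) ∧
      cconst n = 1 - ∑ j ∈ Finset.range (n + 1), γs j / (j.factorial : ℝ) := by
  intro n
  refine ⟨stieltjesConst, fun j _ ↦ tendsto_stieltjesSeq j, ?_⟩
  rw [sum_stieltjesConst_div_factorial, sub_sub_cancel]
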